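/- arXiv:1104.0880 — 8 statements merged into one kernel-verified Lean document; each statement's English description precedes it below -/
import Mathlib

section
/- Let V be a finite-dimensional real vector space and L ⊆ V × V* a maximal isotropic subspace, and let F := pr₁(L) be the image of L under the projection onto the first factor. Then there exists a unique skew-symmetric bilinear form Ω_F on F such that L = {(X,α) ∈ V × V* : X ∈ F and α(Y) = −Ω_F(X,Y) for all Y ∈ F}. Conversely, for every subspace F ⊆ V and every skew-symmetric bilinear form Ω_F on F, the set {(X,α) ∈ V × V* : X ∈ F and α(Y) = −Ω_F(X,Y) for all Y ∈ F} is a maximal isotropic subspace of V × V* whose first projection equals F. (This is the fibrewise linear-algebra content of the one-to-one correspondence between regular almost Dirac structures and pairs (F, Ω_F).) -/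
/-!
A linear section `s` of the projection `L → F = pr₁(L)` gives the form
`Ω(X, Y) = -(pr₂ (s X))(Y)`. Isotropy of `L` makes `Ω` skew, and `L = L^⊥` says exactly that `L` is
the set described by `Ω`; uniqueness follows by evaluating at the points `s X ∈ L`.
Conversely, the set `graphDirac F Ω` is isotropic by skewness. If `p` is orthogonal to it, pairing
with `(0, f)`, `f ∈ F°`, gives `p.1 ∈ F`, and pairing with lifts `(Y, β)` of `Y ∈ F`, which exist
because functionals on `F` extend to `V`, gives the condition on `p.2`.
-/

/-- The symmetric pairing `⟨(X,α),(Y,β)⟩ = α(Y) + β(X)` on `V × V*`. -/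
def diracPairing {V : Type*} [AddCommGroup V] [Module ℝ V]
    (p q : V × Module.Dual ℝ V) : ℝ := p.2 q.1 + q.2 p.1

/-- A subspace `L ⊆ V × V*` is maximal isotropic (a linear almost Dirac structure)
if it coincides with its orthogonal complement for the pairing. -/
def IsMaxIsotropic {V : Type*} [AddCommGroup V] [Module ℝ V]
    (L : Submodule ℝ (V × Module.Dual ℝ V)) : Prop :=
  ∀ p : V × Module.Dual ℝ V, p ∈ L ↔ ∀ q ∈ L, diracPairing p q = 0

/-- The subspace `{(X, α) : X ∈ F, α(Y) = -Ω(X, Y) for all Y ∈ F}` attached to a pair `(F, Ω)`. -/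
def graphDirac {V : Type*} [AddCommGroup V] [Module ℝ V]
    (F : Submodule ℝ V) (Ω : F →ₗ[ℝ] (F →ₗ[ℝ] ℝ)) : Submodule ℝ (V × Module.Dual ℝ V) where
  carrier := {p | ∃ h : p.1 ∈ F, ∀ Y : F, p.2 (Y : V) = -(Ω ⟨p.1, h⟩ Y)}
  zero_mem' := by
    refine ⟨F.zero_mem, fun Y => ?_⟩
    have h : (⟨(0 : V × Module.Dual ℝ V).1, F.zero_mem⟩ : F) = 0 := rfl
    rw [h]
    simp
  add_mem' := by
    rintro p q ⟨hp, hp'⟩ ⟨hq, hq'⟩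
    refine ⟨F.add_mem hp hq, fun Y => ?_⟩
    have h : (⟨(p + q).1, F.add_mem hp hq⟩ : F) = ⟨p.1, hp⟩ + ⟨q.1, hq⟩ := rfl
    rw [h, map_add, LinearMap.add_apply, neg_add, ← hp', ← hq']
    rfl
  smul_mem' := by
    rintro c p ⟨hp, hp'⟩
    refine ⟨F.smul_mem c hp, fun Y => ?_⟩
    have h : (⟨(c • p).1, F.smul_mem c hp⟩ : F) = c • ⟨p.1, hp⟩ := rfl
    rw [h, map_smul, LinearMap.smul_apply, ← smul_neg, ← hp']
    rfl

/-- Every `X ∈ F` lifts to some `(X, α) ∈ graphDirac F Ω`: extend `-Ω(X, ·)` from `F` to `V`. -/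
lemma exists_mem_graphDirac {V : Type*} [AddCommGroup V] [Module ℝ V]
    (F : Submodule ℝ V) (Ω : F →ₗ[ℝ] (F →ₗ[ℝ] ℝ)) (X : F) :
    ∃ α : Module.Dual ℝ V, ((X : V), α) ∈ graphDirac F Ω := by
  obtain ⟨α, hα⟩ := LinearMap.exists_extend (-(Ω X))
  exact ⟨α, X.2, fun Y => LinearMap.congr_fun hα Y⟩

lemma map_fst_graphDirac {V : Type*} [AddCommGroup V] [Module ℝ V]
    (F : Submodule ℝ V) (Ω : F →ₗ[ℝ] (F →ₗ[ℝ] ℝ)) :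
    (graphDirac F Ω).map (LinearMap.fst ℝ V (Module.Dual ℝ V)) = F := by
  ext x
  constructor
  · rintro ⟨p, ⟨hp, -⟩, rfl⟩
    exact hp
  · intro hx
    obtain ⟨α, hα⟩ := exists_mem_graphDirac F Ω ⟨x, hx⟩
    exact ⟨_, hα, rfl⟩

lemma isMaxIsotropic_graphDirac {V : Type*} [AddCommGroup V] [Module ℝ V]
    (F : Submodule ℝ V) (Ω : F →ₗ[ℝ] (F →ₗ[ℝ] ℝ)) (hΩ : ∀ x y, Ω x y = -(Ω y x)) :
    IsMaxIsotropic (graphDirac F Ω) := by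
  intro p
  constructor
  · rintro ⟨hp, hp'⟩ q ⟨hq, hq'⟩
    have h₁ := hp' ⟨q.1, hq⟩
    have h₂ := hq' ⟨p.1, hp⟩
    have h₃ := hΩ ⟨p.1, hp⟩ ⟨q.1, hq⟩
    simp only [diracPairing] at *
    linarith
  · intro h
    -- The elements `(0, f)` with `f` vanishing on `F` lie in the subspace and force `p.1 ∈ F`.
    have hp : p.1 ∈ F := by
      by_contra hp
      obtain ⟨f, hf, hF⟩ := Submodule.exists_le_ker_of_notMem hp
      have hmem : ((0 : V), f) ∈ graphDirac F Ω := by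
        refine ⟨F.zero_mem, fun Y => ?_⟩
        have h0 : (⟨((0 : V), f).1, F.zero_mem⟩ : F) = 0 := rfl
        rw [h0, map_zero, LinearMap.zero_apply, neg_zero]
        exact hF Y.2
      have := h _ hmem
      simp only [diracPairing, map_zero, zero_add] at this
      exact hf this
    refine ⟨hp, fun Y => ?_⟩
    obtain ⟨β, hβ⟩ := exists_mem_graphDirac F Ω Y
    have h₁ := h _ hβ
    obtain ⟨_, hβ'⟩ := hβ
    have h₂ : β p.1 = -(Ω Y ⟨p.1, hp⟩) := hβ' ⟨p.1, hp⟩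
    have h₃ := hΩ Y ⟨p.1, hp⟩
    simp only [diracPairing] at h₁
    linarith

/-- Fibrewise correspondence between linear almost Dirac structures `L` and pairs
`(F, Ω_F)` of a subspace `F = pr₁(L)` with a skew-symmetric bilinear form on it. -/
theorem stmt0 {V : Type*} [AddCommGroup V] [Module ℝ V] [FiniteDimensional ℝ V] :
    (∀ L : Submodule ℝ (V × Module.Dual ℝ V), IsMaxIsotropic L →
      ∃! Ω : L.map (LinearMap.fst ℝ V (Module.Dual ℝ V)) →ₗ[ℝ]
          (L.map (LinearMap.fst ℝ V (Module.Dual ℝ V)) →ₗ[ℝ] ℝ),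
        (∀ x y, Ω x y = -(Ω y x)) ∧
        (L : Set (V × Module.Dual ℝ V)) =
          {p | ∃ h : p.1 ∈ L.map (LinearMap.fst ℝ V (Module.Dual ℝ V)),
            ∀ Y : L.map (LinearMap.fst ℝ V (Module.Dual ℝ V)),
              p.2 (Y : V) = -(Ω ⟨p.1, h⟩ Y)}) ∧
    (∀ (F : Submodule ℝ V) (Ω : F →ₗ[ℝ] (F →ₗ[ℝ] ℝ)), (∀ x y, Ω x y = -(Ω y x)) →
      ∃ L : Submodule ℝ (V × Module.Dual ℝ V), IsMaxIsotropic L ∧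
        L.map (LinearMap.fst ℝ V (Module.Dual ℝ V)) = F ∧
        (L : Set (V × Module.Dual ℝ V)) =
          {p | ∃ h : p.1 ∈ F, ∀ Y : F, p.2 (Y : V) = -(Ω ⟨p.1, h⟩ Y)}) := by
  refine ⟨fun L hL => ?_, fun F Ω hΩ =>
    ⟨graphDirac F Ω, isMaxIsotropic_graphDirac F Ω hΩ, map_fst_graphDirac F Ω, rfl⟩⟩
  set F := L.map (LinearMap.fst ℝ V (Module.Dual ℝ V)) with hF
  have hfst : ∀ p ∈ L, p.1 ∈ F := fun p hp => ⟨p, hp, rfl⟩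
  -- A linear section `s` of the projection `L → F`.
  obtain ⟨s, hsL, hs⟩ : ∃ s : F →ₗ[ℝ] V × Module.Dual ℝ V,
      (∀ x, s x ∈ L) ∧ ∀ x, (s x).1 = x := by
    obtain ⟨t, ht⟩ := LinearMap.exists_rightInverse_of_surjective
      ((LinearMap.fst ℝ V (Module.Dual ℝ V)).submoduleMap L)
      (LinearMap.range_eq_top.2 (LinearMap.submoduleMap_surjective _ _))
    exact ⟨L.subtype ∘ₗ t, fun x => (t x).2,
      fun x => congrArg Subtype.val (LinearMap.congr_fun ht x)⟩
  have hiso : ∀ p ∈ L, ∀ q ∈ L, p.2 q.1 + q.2 p.1 = 0 := fun p hp => (hL p).1 hp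
  let Ω : F →ₗ[ℝ] (F →ₗ[ℝ] ℝ) :=
    -(LinearMap.lcomp ℝ ℝ F.subtype ∘ₗ LinearMap.snd ℝ V (Module.Dual ℝ V) ∘ₗ s)
  have hΩ : ∀ x y, Ω x y = -((s x).2 (y : V)) := fun x y => rfl
  refine ⟨Ω, ⟨fun x y => ?_, ?_⟩, ?_⟩
  · have h := hiso _ (hsL x) _ (hsL y)
    rw [hs, hs] at h
    rw [hΩ, hΩ]
    linarith
  · ext p
    constructor
    · intro hp
      refine ⟨hfst p hp, fun Y => ?_⟩
      have h₁ := hiso _ hp _ (hsL Y)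
      have h₂ := hiso _ (hsL ⟨p.1, hfst p hp⟩) _ (hsL Y)
      rw [hs] at h₁
      rw [hs, hs] at h₂
      rw [hΩ]
      linarith
    · rintro ⟨hp, hp'⟩
      refine (hL p).2 fun q hq => ?_
      have h₁ := hp' ⟨q.1, hfst q hq⟩
      have h₂ := hiso _ (hsL ⟨p.1, hp⟩) _ hq
      rw [hs] at h₂
      rw [hΩ] at h₁
      simp only [diracPairing] at *
      linarith
  · rintro Ω' ⟨-, hΩ'⟩
    ext x y
    -- `s x` lies in `L`, so the description of `L` by `Ω'` determines `Ω' x y`.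
    have hx : s x ∈ (L : Set (V × Module.Dual ℝ V)) := hsL x
    rw [hΩ'] at hx
    obtain ⟨h, hx'⟩ := hx
    have h₁ := hx' y
    have h₂ : (⟨(s x).1, h⟩ : F) = x := Subtype.ext (hs x)
    rw [h₂] at h₁
    rw [hΩ]
    linarith
end

section
/- Let V be a finite-dimensional real vector space and L₁, L₂ ⊆ V × V* maximal isotropic subspaces. Then there exists a skew-symmetric bilinear form B on V with τ_B(L₁) = L₂ (i.e. L₁ and L₂ are gauge related) if and only if pr₁(L₁) = pr₁(L₂). (Fibrewise content of the theorem: any two regular almost Dirac structures defining the same distribution are gauge related.) -/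
/-- The gauge transformation `(X,α) ↦ (X, α + B♭(X))` of `V × V*` associated to a
bilinear form `B` on `V`, given through its flat map `B : V →ₗ V*`. -/
def gaugeMap {V : Type*} [AddCommGroup V] [Module ℝ V]
    (B : V →ₗ[ℝ] Module.Dual ℝ V) :
    (V × Module.Dual ℝ V) →ₗ[ℝ] (V × Module.Dual ℝ V) :=
  (LinearMap.fst ℝ V (Module.Dual ℝ V)).prod
    (LinearMap.snd ℝ V (Module.Dual ℝ V) + B.comp (LinearMap.fst ℝ V (Module.Dual ℝ V)))

/-- A linear choice of covectors over the first projection of `L`, extended to all of `V`. -/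
lemma exists_lift {V : Type*} [AddCommGroup V] [Module ℝ V]
    (L : Submodule ℝ (V × Module.Dual ℝ V)) :
    ∃ f : V →ₗ[ℝ] Module.Dual ℝ V,
      ∀ x ∈ Submodule.map (LinearMap.fst ℝ V (Module.Dual ℝ V)) L, (x, f x) ∈ L := by
  obtain ⟨s, hs⟩ := LinearMap.exists_rightInverse_of_surjective
    ((LinearMap.fst ℝ V (Module.Dual ℝ V)).submoduleMap L)
    (LinearMap.range_eq_top.2 (LinearMap.submoduleMap_surjective _ L))
  obtain ⟨f, hf⟩ := LinearMap.exists_extend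
    ((LinearMap.snd ℝ V (Module.Dual ℝ V)).comp (L.subtype.comp s))
  refine ⟨f, fun x hx => ?_⟩
  have e1 : (s ⟨x, hx⟩ : V × Module.Dual ℝ V).1 = x :=
    congrArg Subtype.val (LinearMap.congr_fun hs ⟨x, hx⟩)
  have e2 : f x = (s ⟨x, hx⟩ : V × Module.Dual ℝ V).2 := LinearMap.congr_fun hf ⟨x, hx⟩
  have e3 : (x, f x) = (s ⟨x, hx⟩ : V × Module.Dual ℝ V) := Prod.ext e1.symm e2
  rw [e3]
  exact (s ⟨x, hx⟩).2

/-- A form `B` restricting to `f₂ - f₁` on the common first projection moves `L₁` into `L₂`. -/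
lemma gauge_mem {V : Type*} [AddCommGroup V] [Module ℝ V]
    {L₁ L₂ : Submodule ℝ (V × Module.Dual ℝ V)}
    (h₁ : IsMaxIsotropic L₁) (h₂ : IsMaxIsotropic L₂)
    (h : Submodule.map (LinearMap.fst ℝ V (Module.Dual ℝ V)) L₁ =
      Submodule.map (LinearMap.fst ℝ V (Module.Dual ℝ V)) L₂)
    {f₁ f₂ B : V →ₗ[ℝ] Module.Dual ℝ V}
    (hf₁ : ∀ x ∈ Submodule.map (LinearMap.fst ℝ V (Module.Dual ℝ V)) L₁, (x, f₁ x) ∈ L₁)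
    (hf₂ : ∀ x ∈ Submodule.map (LinearMap.fst ℝ V (Module.Dual ℝ V)) L₂, (x, f₂ x) ∈ L₂)
    (hB : ∀ x ∈ Submodule.map (LinearMap.fst ℝ V (Module.Dual ℝ V)) L₁,
      ∀ y ∈ Submodule.map (LinearMap.fst ℝ V (Module.Dual ℝ V)) L₁, B x y = f₂ x y - f₁ x y)
    {X : V} {α : Module.Dual ℝ V} (hX : (X, α) ∈ L₁) : (X, α + B X) ∈ L₂ := by
  have hXE : X ∈ Submodule.map (LinearMap.fst ℝ V (Module.Dual ℝ V)) L₁ := ⟨_, hX, rfl⟩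
  rw [h₂]
  rintro ⟨Y, β⟩ hY
  have hYE : Y ∈ Submodule.map (LinearMap.fst ℝ V (Module.Dual ℝ V)) L₁ := h ▸ ⟨_, hY, rfl⟩
  have a := (h₁ _).1 hX _ (hf₁ Y hYE)
  have b := (h₁ _).1 (hf₁ X hXE) _ (hf₁ Y hYE)
  have c := (h₂ _).1 (hf₂ X (h ▸ hXE)) _ hY
  have d := hB X hXE Y hYE
  simp only [diracPairing, LinearMap.add_apply] at a b c ⊢
  linarith

/-- Two linear almost Dirac structures are gauge related by a skew-symmetric bilinear
form `B` if and only if they have the same first projection. -/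
theorem stmt2 {V : Type*} [AddCommGroup V] [Module ℝ V] [FiniteDimensional ℝ V]
    (L₁ L₂ : Submodule ℝ (V × Module.Dual ℝ V))
    (h₁ : IsMaxIsotropic L₁) (h₂ : IsMaxIsotropic L₂) :
    (∃ B : V →ₗ[ℝ] Module.Dual ℝ V, (∀ v w, B v w = -(B w v)) ∧
        Submodule.map (gaugeMap B) L₁ = L₂) ↔
      Submodule.map (LinearMap.fst ℝ V (Module.Dual ℝ V)) L₁ =
        Submodule.map (LinearMap.fst ℝ V (Module.Dual ℝ V)) L₂ := by
  constructor
  · rintro ⟨B, -, rfl⟩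
    rw [← Submodule.map_comp]
    rfl
  · intro h
    obtain ⟨f₁, hf₁⟩ := exists_lift L₁
    obtain ⟨f₂, hf₂⟩ := exists_lift L₂
    obtain ⟨P, hPE, hP⟩ : ∃ P : V →ₗ[ℝ] V,
        (∀ v, P v ∈ Submodule.map (LinearMap.fst ℝ V (Module.Dual ℝ V)) L₁) ∧
        ∀ v ∈ Submodule.map (LinearMap.fst ℝ V (Module.Dual ℝ V)) L₁, P v = v := by
      obtain ⟨Q, hQ⟩ := LinearMap.exists_extend
        (LinearMap.id (R := ℝ) (M := Submodule.map (LinearMap.fst ℝ V (Module.Dual ℝ V)) L₁))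
      exact ⟨(Submodule.subtype _).comp Q, fun v => (Q v).2,
        fun v hv => congrArg Subtype.val (LinearMap.congr_fun hQ ⟨v, hv⟩)⟩
    refine ⟨(f₂ - f₁).compl₁₂ P P, fun v w => ?_, le_antisymm ?_ ?_⟩
    · have a := (h₁ _).1 (hf₁ _ (hPE v)) _ (hf₁ _ (hPE w))
      have b := (h₂ _).1 (hf₂ _ (h ▸ hPE v)) _ (hf₂ _ (h ▸ hPE w))
      simp only [diracPairing, LinearMap.compl₁₂_apply, LinearMap.sub_apply] at a b ⊢
      linarith
    · rintro _ ⟨⟨X, α⟩, hX, rfl⟩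
      refine gauge_mem (B := (f₂ - f₁).compl₁₂ P P) h₁ h₂ h hf₁ hf₂ (fun x hx y hy => ?_) hX
      simp [hP x hx, hP y hy]
    · rintro ⟨X, β⟩ hX
      refine ⟨(X, β + (-(f₂ - f₁).compl₁₂ P P) X), ?_, ?_⟩
      · refine gauge_mem h₂ h₁ h.symm hf₂ hf₁ (fun x hx y hy => ?_) hX
        rw [← h] at hx hy
        simp [hP x hx, hP y hy]
      · simp [gaugeMap]
end

section
/- Let V be a finite-dimensional real vector space, W ⊆ V a subspace, and Ann(W) := {α ∈ V* : α(w) = 0 for all w ∈ W}. Let π : V* → V be a skew linear map with π(Ann(W)) ⊆ W, and let B be a skew-symmetric bilinear form on V such that B(v,w) = 0 whenever w ∈ W. Then (B♭ ∘ π) ∘ (B♭ ∘ π) = 0, and consequently Id_{V*} − B♭ ∘ π is invertible. (This is the fibrewise content, with W the vertical subspace of a vector bundle P → Q, of the proposition: if every semi-basic 1-form is sent by π♯ to a vertical vector, then the gauge transformation of π by a semi-basic 2-form B is again a bivector field.) -/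
/-- If `π` is skew and maps the annihilator of `W` into `W`, and `B` is a
skew-symmetric bilinear form vanishing whenever its second argument is in `W`,
then `(B♭∘π)² = 0` and hence `Id − B♭∘π` is invertible. -/
theorem stmt4 {V : Type*} [AddCommGroup V] [Module ℝ V] [FiniteDimensional ℝ V]
    (W : Submodule ℝ V) (π : Module.Dual ℝ V →ₗ[ℝ] V)
    (hπskew : ∀ α β : Module.Dual ℝ V, β (π α) = -(α (π β)))
    (hπW : ∀ α ∈ W.dualAnnihilator, π α ∈ W)
    (B : V →ₗ[ℝ] Module.Dual ℝ V) (hBskew : ∀ v w, B v w = -(B w v))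
    (hBW : ∀ v w, w ∈ W → B v w = 0) :
    (B.comp π).comp (B.comp π) = 0 ∧
    Function.Bijective
      (LinearMap.id - B.comp π : Module.Dual ℝ V →ₗ[ℝ] Module.Dual ℝ V) := by
  -- Each `B v` annihilates `W`, so `π (B v) ∈ W`, and `B` kills `W` by skew-symmetry.
  have key : ∀ v, B (π (B v)) = 0 := by
    intro v
    have hW : π (B v) ∈ W :=
      hπW _ ((Submodule.mem_dualAnnihilator _).2 fun w hw => hBW v w hw)
    ext u
    rw [hBskew, hBW u _ hW, neg_zero, LinearMap.zero_apply]
  refine ⟨LinearMap.ext fun α => key (π α), ?_⟩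
  -- As `B ∘ π` squares to zero, the inverse is `id + B ∘ π`.
  refine Function.bijective_iff_has_inverse.2 ⟨fun α => α + B (π α), fun α => ?_, fun α => ?_⟩
  · simp [key]
  · simp [key]
end

section
/- Let V be a finite-dimensional real vector space, T : V → V a linear automorphism with dual map T* : V* → V*, π : V* → V a skew linear map with T ∘ π ∘ T* = π, and B a skew-symmetric bilinear form on V with B(Tv, Tw) = B(v,w) for all v, w ∈ V. Assume Id_{V*} − B♭ ∘ π is invertible. Then the gauged map π^B := π ∘ (Id_{V*} − B♭ ∘ π)⁻¹ also satisfies T ∘ π^B ∘ T* = π^B. (Fibrewise content of the proposition: if a group action preserves an almost Poisson structure π and an admissible 2-form B, then it preserves the gauge-transformed bivector π^B.) -/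
/-!
Invariance of `B` reads `T* ∘ B♭ ∘ T = B♭`. Together with `T ∘ π ∘ T* = π` it gives
`T* ∘ B♭ ∘ π = T* ∘ B♭ ∘ T ∘ π ∘ T* = B♭ ∘ π ∘ T*`, so `T*` commutes with `Id - B♭ ∘ π`, hence
with its inverse `S`. Therefore `T ∘ π ∘ S ∘ T* = T ∘ π ∘ T* ∘ S = π ∘ S`.
-/

/-- If an automorphism `T` of `V` preserves a skew map `π : V* → V` (i.e.
`T ∘ π ∘ T* = π`) and a skew-symmetric bilinear form `B` (i.e. `B(Tv,Tw) = B(v,w)`),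
and `Id − B♭∘π` is invertible with inverse `S`, then `T` preserves the gauged map
`π^B = π ∘ S`. -/
theorem stmt5 {V : Type*} [AddCommGroup V] [Module ℝ V] [FiniteDimensional ℝ V]
    (T : V →ₗ[ℝ] V) (hT : Function.Bijective T)
    (π : Module.Dual ℝ V →ₗ[ℝ] V)
    (hπskew : ∀ α β : Module.Dual ℝ V, β (π α) = -(α (π β)))
    (hTπ : T.comp (π.comp T.dualMap) = π)
    (B : V →ₗ[ℝ] Module.Dual ℝ V) (hBskew : ∀ v w, B v w = -(B w v))
    (hTB : ∀ v w, B (T v) (T w) = B v w)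
    (S : Module.Dual ℝ V →ₗ[ℝ] Module.Dual ℝ V)
    (hS₁ : (LinearMap.id - B.comp π).comp S = LinearMap.id)
    (hS₂ : S.comp (LinearMap.id - B.comp π) = LinearMap.id) :
    T.comp ((π.comp S).comp T.dualMap) = π.comp S := by
  have hB : T.dualMap.comp (B.comp T) = B := by
    ext v w
    exact hTB v w
  have hBπ : T.dualMap.comp (B.comp π) = (B.comp π).comp T.dualMap := by
    conv_lhs => rw [← hTπ]
    conv_rhs => rw [← hB]
    rfl
  have hA : T.dualMap.comp (LinearMap.id - B.comp π)
      = (LinearMap.id - B.comp π).comp T.dualMap := by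
    rw [LinearMap.comp_sub, LinearMap.sub_comp, hBπ]
    rfl
  have hS : S.comp T.dualMap = T.dualMap.comp S :=
    calc S.comp T.dualMap
        = S.comp ((T.dualMap.comp (LinearMap.id - B.comp π)).comp S) := by
          rw [LinearMap.comp_assoc, hS₁, LinearMap.comp_id]
      _ = (S.comp (LinearMap.id - B.comp π)).comp (T.dualMap.comp S) := by
          rw [hA]
          rfl
      _ = T.dualMap.comp S := by rw [hS₂, LinearMap.id_comp]
  calc T.comp ((π.comp S).comp T.dualMap)
      = (T.comp (π.comp T.dualMap)).comp S := by
        rw [LinearMap.comp_assoc, hS]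
        rfl
    _ = π.comp S := by rw [hTπ]
end

section
/- Define a₃(γ,K) := K + m·r²·J⁻¹K and the bracket {·,·}_Rank3 := {·,·}_{a₃} with Hamiltonian vector fields X_g := X^{a₃}_g. Define the 1-form χ at p = (γ,K) by χ_p(u,v) := γ·v + a₃(γ,K)·u for (u,v) ∈ ℝ³×ℝ³. Let γ₁ and K₁ denote the coordinate functions (γ,K) ↦ γ₁ and (γ,K) ↦ K₁. Then: (a) χ_p(X_h(p)) = 0 for every smooth h : ℝ³×ℝ³ → ℝ and every p; (b) if γ₂ ≠ 0 or γ₃ ≠ 0 then χ_p([X_{γ₁}, X_{K₁}](p)) ≠ 0; consequently, at any such p the Lie bracket [X_{γ₁}, X_{K₁}](p) does not belong to the linear span of {X_h(p) : h smooth}, so the characteristic distribution of {·,·}_Rank3 is not involutive (in particular not integrable). -/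
/-!
With `a = a₃(γ, K)`, the form `χ` kills `X_h = (γ × h_K, a × h_K + γ × h_γ)` because
`γ · (γ × h_γ) = 0` and the triple products `γ · (a × h_K)` and `a · (γ × h_K)` are opposite
(`chi3_hamVF`).

The coefficient `a` is diagonal in `K`, with entries `d_i = 1 + m r² / (I_i + m r²)`, so
`X_{γ₁}` and `X_{K₁}` are linear vector fields, each its own derivative, and their Lie bracket is
`(0, (0, -(d₃ - 1) γ₂, -(d₂ - 1) γ₃))`. Hence `χ` takes on it the value
`-(d₃ - 1) γ₂² - (d₂ - 1) γ₃²` (`chi3_lieB`), which is negative as soon as `γ₂` or `γ₃` is nonzero,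
since `d_i > 1`. By linearity `χ_p` vanishes on the span of the Hamiltonian vectors at `p`, so the
bracket lies outside that span.
-/

open Matrix

noncomputable section

/-- Phase space factor `ℝ³`. -/
abbrev R3 : Type := Fin 3 → ℝ

/-- The ℝ³-valued gradient `∂f/∂γ` (γ is the first factor of the phase space). -/
noncomputable def gradG (f : R3 × R3 → ℝ) (p : R3 × R3) : R3 :=
  fun i => fderiv ℝ f p (Pi.single i 1, 0)

/-- The ℝ³-valued gradient `∂f/∂K` (K is the second factor of the phase space). -/
noncomputable def gradK (f : R3 × R3 → ℝ) (p : R3 × R3) : R3 :=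
  fun i => fderiv ℝ f p (0, Pi.single i 1)

/-- The bracket `{f,g}_a = −a·(f_K × g_K) − γ·(f_K × g_γ − g_K × f_γ)`. -/
noncomputable def nhBracket (a : R3 × R3 → R3) (f g : R3 × R3 → ℝ) (p : R3 × R3) : ℝ :=
  -(a p ⬝ᵥ crossProduct (gradK f p) (gradK g p)) -
    p.1 ⬝ᵥ (crossProduct (gradK f p) (gradG g p) - crossProduct (gradK g p) (gradG f p))

/-- The Hamiltonian vector field `X^a_g = (γ × g_K, a × g_K + γ × g_γ)`. -/
noncomputable def hamVF (a : R3 × R3 → R3) (g : R3 × R3 → ℝ) (p : R3 × R3) : R3 × R3 :=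
  (crossProduct p.1 (gradK g p), crossProduct (a p) (gradK g p) + crossProduct p.1 (gradG g p))

/-- The Lie bracket of vector fields `[X,Y](p) = DY(p)(X(p)) − DX(p)(Y(p))`. -/
noncomputable def lieB (X Y : R3 × R3 → R3 × R3) (p : R3 × R3) : R3 × R3 :=
  fderiv ℝ Y p (X p) - fderiv ℝ X p (Y p)

/-- The inverse of `J = 𝕀 + m r² E`, acting on ℝ³. -/
def Jinv (m r I1 I2 I3 : ℝ) : Matrix (Fin 3) (Fin 3) ℝ :=
  Matrix.diagonal ![(I1 + m*r^2)⁻¹, (I2 + m*r^2)⁻¹, (I3 + m*r^2)⁻¹]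

/-- The coefficient `a₃(γ,K) = K + m r² J⁻¹K` of the bracket `{·,·}_Rank3`. -/
noncomputable def a3 (m r I1 I2 I3 : ℝ) (p : R3 × R3) : R3 :=
  p.2 + (m*r^2) • (Jinv m r I1 I2 I3 *ᵥ p.2)

/-- The 1-form `χ_p(u,v) = γ·v + a₃(γ,K)·u`. -/
noncomputable def chi3 (m r I1 I2 I3 : ℝ) (p w : R3 × R3) : ℝ :=
  p.1 ⬝ᵥ w.2 + a3 m r I1 I2 I3 p ⬝ᵥ w.1

/-- The form `χ_p` is linear in the tangent vector. -/
def chi3Lin (m r I1 I2 I3 : ℝ) (p : R3 × R3) : R3 × R3 →ₗ[ℝ] ℝ where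
  toFun := chi3 m r I1 I2 I3 p
  map_add' x y := by
    simp only [chi3, Prod.fst_add, Prod.snd_add, dotProduct_add]
    ring
  map_smul' c x := by
    simp only [chi3, Prod.smul_fst, Prod.smul_snd, dotProduct_smul, smul_eq_mul,
      RingHom.id_apply]
    ring

/-- Both terms `γ · (a × h_K)` and `a · (γ × h_K)` are triple products that cancel, so no
regularity of `h` is needed. -/
lemma chi3_hamVF (m r I1 I2 I3 : ℝ) (h : R3 × R3 → ℝ) (p : R3 × R3) :
    chi3 m r I1 I2 I3 p (hamVF (a3 m r I1 I2 I3) h p) = 0 := by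
  simp only [chi3, hamVF]
  generalize a3 m r I1 I2 I3 p = a
  simp [cross_apply, dotProduct, Fin.sum_univ_three]
  ring

lemma hasFDerivAt_fst_apply (i : Fin 3) (p : R3 × R3) :
    HasFDerivAt (fun q : R3 × R3 => q.1 i)
      ((ContinuousLinearMap.proj (R := ℝ) i).comp (ContinuousLinearMap.fst ℝ R3 R3)) p :=
  ((ContinuousLinearMap.proj (R := ℝ) i).comp (ContinuousLinearMap.fst ℝ R3 R3)).hasFDerivAt

lemma hasFDerivAt_snd_apply (i : Fin 3) (p : R3 × R3) :
    HasFDerivAt (fun q : R3 × R3 => q.2 i)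
      ((ContinuousLinearMap.proj (R := ℝ) i).comp (ContinuousLinearMap.snd ℝ R3 R3)) p :=
  ((ContinuousLinearMap.proj (R := ℝ) i).comp (ContinuousLinearMap.snd ℝ R3 R3)).hasFDerivAt

/-- The field `X_{γ₁} = (0, γ × e₁)`, as a linear map. -/
def fieldG : R3 × R3 →ₗ[ℝ] R3 × R3 where
  toFun q := (0, ![0, q.1 2, -q.1 1])
  map_add' x y := by
    ext i <;> fin_cases i <;> simp
    ring
  map_smul' c x := by ext i <;> fin_cases i <;> simp

/-- The field `X_{K₁} = (γ × e₁, a × e₁)` for the diagonal coefficient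
`a = (d₁ K₁, d₂ K₂, d₃ K₃)`, as a linear map; `d₁` does not enter. -/
def fieldK (d2 d3 : ℝ) : R3 × R3 →ₗ[ℝ] R3 × R3 where
  toFun q := (![0, q.1 2, -q.1 1], ![0, d3 * q.2 2, -(d2 * q.2 1)])
  map_add' x y := by
    ext i <;> fin_cases i <;> simp <;> ring
  map_smul' c x := by
    ext i <;> fin_cases i <;> simp <;> ring

lemma hamVF_gamma (a : R3 × R3 → R3) :
    hamVF a (fun q => q.1 0) = fieldG.toContinuousLinearMap := by
  ext q i <;> fin_cases i <;>
    simp [hamVF, gradG, gradK, (hasFDerivAt_fst_apply 0 q).fderiv, fieldG, cross_apply]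

lemma hamVF_K (m r I1 I2 I3 : ℝ) :
    hamVF (a3 m r I1 I2 I3) (fun q => q.2 0) =
      (fieldK (1 + m * r ^ 2 * (I2 + m * r ^ 2)⁻¹)
        (1 + m * r ^ 2 * (I3 + m * r ^ 2)⁻¹)).toContinuousLinearMap := by
  ext q i <;> fin_cases i <;>
    simp [hamVF, gradG, gradK, (hasFDerivAt_snd_apply 0 q).fderiv, fieldK, cross_apply, a3, Jinv,
      mulVec_diagonal] <;> ring

/-- The value of `χ` on the Lie bracket is `-(d₃ - 1) γ₂² - (d₂ - 1) γ₃²`, where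
`d_i = 1 + m r² / (I_i + m r²)`. -/
lemma chi3_lieB (m r I1 I2 I3 : ℝ) (p : R3 × R3) :
    chi3 m r I1 I2 I3 p
      (lieB (hamVF (a3 m r I1 I2 I3) (fun q => q.1 0))
        (hamVF (a3 m r I1 I2 I3) (fun q => q.2 0)) p) =
      -(m * r ^ 2 * ((I3 + m * r ^ 2)⁻¹ * p.1 1 ^ 2 + (I2 + m * r ^ 2)⁻¹ * p.1 2 ^ 2)) := by
  rw [hamVF_gamma, hamVF_K, lieB, ContinuousLinearMap.fderiv, ContinuousLinearMap.fderiv]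
  simp [chi3, fieldG, fieldK, dotProduct, Fin.sum_univ_three]
  ring

/-- The characteristic distribution of the bracket `{·,·}_Rank3` is annihilated by
the 1-form `χ`, but `χ` does not annihilate the Lie bracket `[X_{γ₁}, X_{K₁}]` at any
point with `γ₂ ≠ 0` or `γ₃ ≠ 0`; hence the distribution is not involutive. -/
theorem stmt6 (m r I1 I2 I3 : ℝ) (hm : 0 < m) (hr : 0 < r)
    (h1 : 0 < I1) (h2 : 0 < I2) (h3 : 0 < I3) :
    (∀ h : R3 × R3 → ℝ, ContDiff ℝ (⊤ : ℕ∞) h → ∀ p : R3 × R3,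
      chi3 m r I1 I2 I3 p (hamVF (a3 m r I1 I2 I3) h p) = 0) ∧
    (∀ p : R3 × R3, (p.1 1 ≠ 0 ∨ p.1 2 ≠ 0) →
      chi3 m r I1 I2 I3 p
        (lieB (hamVF (a3 m r I1 I2 I3) (fun q => q.1 0))
              (hamVF (a3 m r I1 I2 I3) (fun q => q.2 0)) p) ≠ 0 ∧
      lieB (hamVF (a3 m r I1 I2 I3) (fun q => q.1 0))
           (hamVF (a3 m r I1 I2 I3) (fun q => q.2 0)) p ∉
        Submodule.span ℝ {v : R3 × R3 | ∃ h : R3 × R3 → ℝ,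
          ContDiff ℝ (⊤ : ℕ∞) h ∧ v = hamVF (a3 m r I1 I2 I3) h p}) := by
  refine ⟨fun h _ p => chi3_hamVF m r I1 I2 I3 h p, fun p hp => ?_⟩
  have key : chi3 m r I1 I2 I3 p
      (lieB (hamVF (a3 m r I1 I2 I3) (fun q => q.1 0))
        (hamVF (a3 m r I1 I2 I3) (fun q => q.2 0)) p) ≠ 0 := by
    rw [chi3_lieB]
    have hpos : 0 < (I3 + m * r ^ 2)⁻¹ * p.1 1 ^ 2 + (I2 + m * r ^ 2)⁻¹ * p.1 2 ^ 2 := by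
      rcases hp with hp | hp
      · exact add_pos_of_pos_of_nonneg (by positivity) (by positivity)
      · exact add_pos_of_nonneg_of_pos (by positivity) (by positivity)
    exact neg_ne_zero.mpr (by positivity)
  refine ⟨key, fun hmem => key ?_⟩
  have hle : Submodule.span ℝ {v : R3 × R3 | ∃ h : R3 × R3 → ℝ,
      ContDiff ℝ (⊤ : ℕ∞) h ∧ v = hamVF (a3 m r I1 I2 I3) h p} ≤
      LinearMap.ker (chi3Lin m r I1 I2 I3 p) := by
    rw [Submodule.span_le]
    rintro v ⟨h, -, rfl⟩
    exact chi3_hamVF m r I1 I2 I3 h p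
  exact hle hmem

end
end

section
/- Define Ω₁(γ,K) := 𝕀⁻¹K − m·r²·((K·𝕀⁻¹γ)/(‖γ‖² + m·r²·(γ·𝕀⁻¹γ)))·𝕀⁻¹γ for γ ≠ 0, and let {·,·}'_Rank1 be the bracket {·,·}_a with coefficient a(γ,K) := K − m·r²·Ω₁ + m·r²·(Ω₁·γ)·γ. Then the characteristic distribution of {·,·}'_Rank1 is not involutive: there exist smooth functions f, g and a point p with γ-component nonzero such that [X^a_f, X^a_g](p) does not belong to the linear span of {X^a_h(p) : h smooth}. -/
/-!
Every Hamiltonian vector field satisfies `γ · v₂ + a · v₁ = 0`, where `v = (v₁, v₂)` is its value,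
because `γ · (a × u) = -a · (γ × u)`. So the characteristic distribution at `p` lies in the kernel
of the linear functional `annih a p` (`span_le_ker_annih`), and it suffices to find two
Hamiltonian fields whose Lie bracket is not annihilated by it.

Take `f = γ₂`, `g = K₂` (coordinate functions) and `p = (e₃, 0)`. Then `X_f = (0, γ × e₂)` and
`X_g = (γ × e₂, a × e₂)`, and at `p` the bracket is `(0, (∂a/∂K)(-e₁) × e₂ + e₃)`. For the canonical
coefficient `a = K` this vanishes; the term `-m r² 𝕀⁻¹K` of the modified coefficient contributes
`(m r² / I₁) e₃`, on which the functional takes the nonzero value `m r² / I₁`.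
-/

open Matrix

noncomputable section

/-- The inverse of the inertia tensor `𝕀 = diag(I₁,I₂,I₃)`, acting on ℝ³. -/
def Iinv (I1 I2 I3 : ℝ) : Matrix (Fin 3) (Fin 3) ℝ :=
  Matrix.diagonal ![I1⁻¹, I2⁻¹, I3⁻¹]

/-- `Ω₁(γ,K) = 𝕀⁻¹K − m r² ((K·𝕀⁻¹γ)/(‖γ‖² + m r² (γ·𝕀⁻¹γ))) 𝕀⁻¹γ`. -/
noncomputable def Omega1 (m r I1 I2 I3 : ℝ) (p : R3 × R3) : R3 :=
  Iinv I1 I2 I3 *ᵥ p.2 -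
    (m*r^2*((p.2 ⬝ᵥ (Iinv I1 I2 I3 *ᵥ p.1)) /
      (p.1 ⬝ᵥ p.1 + m*r^2*(p.1 ⬝ᵥ (Iinv I1 I2 I3 *ᵥ p.1))))) •
      (Iinv I1 I2 I3 *ᵥ p.1)

/-- The coefficient `a'(γ,K) = K − m r² Ω₁ + m r² (Ω₁·γ) γ` of `{·,·}'_Rank1`. -/
noncomputable def aR1' (m r I1 I2 I3 : ℝ) (p : R3 × R3) : R3 :=
  p.2 - (m*r^2) • Omega1 m r I1 I2 I3 p +
    (m*r^2*(Omega1 m r I1 I2 I3 p ⬝ᵥ p.1)) • p.1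

/-- The functional `v ↦ γ · v₂ + a(p) · v₁`, which annihilates all Hamiltonian vector fields. -/
def annih (a : R3 × R3 → R3) (p : R3 × R3) : (R3 × R3) →ₗ[ℝ] ℝ where
  toFun v := p.1 ⬝ᵥ v.2 + a p ⬝ᵥ v.1
  map_add' v w := by simp only [Prod.fst_add, Prod.snd_add, dotProduct_add]; ring
  map_smul' c v := by
    simp only [Prod.smul_fst, Prod.smul_snd, dotProduct_smul, smul_eq_mul, RingHom.id_apply]; ring

lemma annih_hamVF (a : R3 × R3 → R3) (h : R3 × R3 → ℝ) (p : R3 × R3) :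
    annih a p (hamVF a h p) = 0 := by
  change p.1 ⬝ᵥ _ + a p ⬝ᵥ _ = 0
  simp only [hamVF, cross_apply, dotProduct, Fin.sum_univ_three, Pi.add_apply, Matrix.cons_val]
  ring

lemma span_le_ker_annih (a : R3 × R3 → R3) (p : R3 × R3) :
    Submodule.span ℝ {v : R3 × R3 | ∃ h : R3 × R3 → ℝ,
      ContDiff ℝ (⊤ : ℕ∞) h ∧ v = hamVF a h p} ≤ LinearMap.ker (annih a p) := by
  rw [Submodule.span_le]
  rintro v ⟨h, -, rfl⟩
  exact annih_hamVF a h p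

/-- The coordinate function `γ₂` (index `1` in `Fin 3`). -/
def coordG : (R3 × R3) →L[ℝ] ℝ :=
  (ContinuousLinearMap.proj (R := ℝ) (φ := fun _ : Fin 3 => ℝ) 1).comp
    (ContinuousLinearMap.fst ℝ R3 R3)

/-- The coordinate function `K₂` (index `1` in `Fin 3`). -/
def coordK : (R3 × R3) →L[ℝ] ℝ :=
  (ContinuousLinearMap.proj (R := ℝ) (φ := fun _ : Fin 3 => ℝ) 1).comp
    (ContinuousLinearMap.snd ℝ R3 R3)

lemma hamVF_coordG (a : R3 × R3 → R3) :
    hamVF a coordG = fun p => (0, ![-p.1 2, 0, p.1 0]) := by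
  funext p
  ext i <;> fin_cases i <;>
    simp [hamVF, gradK, gradG, coordG, cross_apply, ContinuousLinearMap.fderiv]

lemma hamVF_coordK (a : R3 × R3 → R3) :
    hamVF a coordK = fun p => (![-p.1 2, 0, p.1 0], ![-a p 2, 0, a p 0]) := by
  funext p
  ext i <;> fin_cases i <;>
    simp [hamVF, gradK, gradG, coordK, cross_apply, ContinuousLinearMap.fderiv]

/-- The point `(e₃, 0)`. -/
def basePt : R3 × R3 := (![0, 0, 1], 0)

/-- A function which is affine along the line through `p` with direction `v` and differentiable
at `p` has the slope as its derivative. -/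
lemma fderiv_eq_of_affine {F : R3 × R3 → R3 × R3} {p v c : R3 × R3}
    (hF : DifferentiableAt ℝ F p) (h : ∀ t : ℝ, F (p + t • v) = F p + t • c) :
    fderiv ℝ F p v = c := by
  rw [← hF.lineDeriv_eq_fderiv, lineDeriv]
  simp only [h]
  have : HasDerivAt (fun t : ℝ => F p + t • c) ((1 : ℝ) • c) 0 :=
    ((hasDerivAt_id (0 : ℝ)).smul_const c).const_add (F p)
  rw [this.deriv, one_smul]

lemma differentiableAt_aR1' {m r I1 I2 I3 : ℝ} (hm : 0 < m) (h3 : 0 < I3) :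
    DifferentiableAt ℝ (aR1' m r I1 I2 I3) basePt := by
  -- The denominator of `Ω₁` at `basePt`.
  have hd : (1 : ℝ) + m * r ^ 2 * I3⁻¹ ≠ 0 := by positivity
  rw [differentiableAt_pi]
  intro i
  have hcoord : ∀ j : Fin 3, DifferentiableAt ℝ (fun p : R3 × R3 => p.1 j) basePt ∧
      DifferentiableAt ℝ (fun p : R3 × R3 => p.2 j) basePt :=
    fun j => ⟨by fun_prop, by fun_prop⟩
  fin_cases i <;>
  · simp only [aR1', Omega1, Iinv, mulVec_diagonal, dotProduct, Fin.sum_univ_three, Pi.add_apply,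
      Pi.sub_apply, Pi.smul_apply, smul_eq_mul]
    fun_prop (disch := simpa [basePt] using hd)

/-- Along the line `K = -t e₁` through the point `γ = e₃`, `K = 0`, the coefficient `a'` is
`-t (1 - m r² / I₁) e₁`: there `𝕀⁻¹K` is orthogonal to `γ`. -/
lemma aR1'_line (m r I1 I2 I3 t : ℝ) :
    aR1' m r I1 I2 I3 (basePt + t • ((0, ![-1, 0, 0]) : R3 × R3)) =
      ![-t * (1 - m * r ^ 2 * I1⁻¹), 0, 0] := by
  ext i
  fin_cases i <;>
  · simp only [aR1', Omega1, Iinv, mulVec_diagonal, dotProduct, Fin.sum_univ_three, Pi.add_apply,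
      Pi.sub_apply, Pi.smul_apply, smul_eq_mul]
    simp [basePt]
    try ring

lemma aR1'_basePt (m r I1 I2 I3 : ℝ) : aR1' m r I1 I2 I3 basePt = 0 := by
  have h := aR1'_line m r I1 I2 I3 0
  rw [zero_smul, add_zero] at h
  rw [h]
  ext i
  fin_cases i <;> simp

lemma lieB_coord {m r I1 I2 I3 : ℝ} (hm : 0 < m) (h3 : 0 < I3) :
    lieB (hamVF (aR1' m r I1 I2 I3) coordG) (hamVF (aR1' m r I1 I2 I3) coordK) basePt =
      (0, ![0, 0, m * r ^ 2 * I1⁻¹]) := by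
  have ha := differentiableAt_aR1' (r := r) (I1 := I1) (I2 := I2) hm h3
  have ha' := differentiableAt_pi.1 ha
  have hX : hamVF (aR1' m r I1 I2 I3) coordG basePt = (0, ![-1, 0, 0]) := by
    simp [hamVF_coordG, basePt]
  have hY : hamVF (aR1' m r I1 I2 I3) coordK basePt = (![-1, 0, 0], 0) := by
    rw [hamVF_coordK]
    ext i <;> fin_cases i <;> simp [aR1'_basePt] <;> simp [basePt]
  have hDY : fderiv ℝ (hamVF (aR1' m r I1 I2 I3) coordK) basePt (0, ![-1, 0, 0]) =
      (0, ![0, 0, -(1 - m * r ^ 2 * I1⁻¹)]) := by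
    apply fderiv_eq_of_affine
    · rw [hamVF_coordK]
      refine DifferentiableAt.prodMk ?_ ?_ <;>
      · rw [differentiableAt_pi]
        intro i
        fin_cases i <;> simp <;> fun_prop
    · intro t
      rw [hY, hamVF_coordK]
      simp only [aR1'_line]
      ext i <;> fin_cases i <;> simp [basePt]
      ring
  have hDX : fderiv ℝ (hamVF (aR1' m r I1 I2 I3) coordG) basePt (![-1, 0, 0], 0) =
      (0, ![0, 0, -1]) := by
    apply fderiv_eq_of_affine
    · rw [hamVF_coordG]
      refine DifferentiableAt.prodMk (by fun_prop) ?_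
      rw [differentiableAt_pi]
      intro i
      fin_cases i <;> simp <;> fun_prop
    · intro t
      rw [hamVF_coordG]
      ext i <;> fin_cases i <;> simp [basePt]
  rw [lieB, hX, hY, hDY, hDX]
  ext i <;> fin_cases i <;> simp

/-- The characteristic distribution of the bracket `{·,·}'_Rank1` is not involutive. -/
theorem stmt8 (m r I1 I2 I3 : ℝ) (hm : 0 < m) (hr : 0 < r)
    (h1 : 0 < I1) (h2 : 0 < I2) (h3 : 0 < I3) :
    ∃ f g : R3 × R3 → ℝ, ContDiff ℝ (⊤ : ℕ∞) f ∧ ContDiff ℝ (⊤ : ℕ∞) g ∧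
      ∃ p : R3 × R3, p.1 ≠ 0 ∧
        lieB (hamVF (aR1' m r I1 I2 I3) f) (hamVF (aR1' m r I1 I2 I3) g) p ∉
          Submodule.span ℝ {v : R3 × R3 | ∃ h : R3 × R3 → ℝ,
            ContDiff ℝ (⊤ : ℕ∞) h ∧ v = hamVF (aR1' m r I1 I2 I3) h p} := by
  refine ⟨coordG, coordK, coordG.contDiff, coordK.contDiff, basePt, ?_, fun hmem => ?_⟩
  · intro h
    simpa [basePt] using congrFun h 2
  · have h := span_le_ker_annih _ _ hmem
    rw [LinearMap.mem_ker, lieB_coord hm h3] at h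
    have hne : m * r ^ 2 * I1⁻¹ ≠ 0 := by positivity
    apply hne
    simpa [annih, basePt, dotProduct, Fin.sum_univ_three] using h

end
end

section
/- Let a : ℝ³×ℝ³ → ℝ³ be any smooth coefficient map, and consider the functions C₁(γ,K) := K·γ and C₂(γ,K) := ‖γ‖². Then: (a) C₂ is a Casimir of {·,·}_a for every choice of a, i.e. {f, C₂}_a = 0 for every smooth f at every point; (b) if moreover a has the form a(γ,K) = K + λ(γ,K)·γ for some smooth scalar function λ (this covers the Lie–Poisson bracket of 𝔰𝔢(3)* with λ = 0, the bracket {·,·}_Rank1 with λ = m·r²·(Ω₁·γ), and the bracket {·,·}'_Rank2 with λ = −m·r²·(Ω₂·γ)), then C₁ is also a Casimir: {f, C₁}_a = 0 for every smooth f at every point. In particular every such bracket restricts to the level set ‖γ‖ = 1, and the generic leaves of the conformally Poisson brackets are the joint level sets of C₁ and C₂. -/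
/-! Both `C₁ = K·γ` and `C₂ = ‖γ‖²` are of the form `u · v` with `u`, `v` linear in `(γ, K)`, so the product rule
(`fderiv_dotProduct`) gives `∂C₂/∂K = 0`, `∂C₂/∂γ = 2γ`, `∂C₁/∂K = γ` and `∂C₁/∂γ = K`.
Substituting into the bracket, `{f, C₂}_a = −2 γ·(f_K × γ) = 0` for every `a`. For `a = K + λγ` the
`λ`-term `γ·(f_K × γ)` and the `f_γ`-term `γ·(γ × f_γ)` vanish, and the remaining
`−K·(f_K × γ) − γ·(f_K × K)` cancels because the triple product is antisymmetric. -/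

open Matrix

noncomputable section

/-- The product rule for the dot product of two linear maps on phase space. -/
lemma fderiv_dotProduct (u v : R3 × R3 →L[ℝ] R3) (p w : R3 × R3) :
    fderiv ℝ (fun q => u q ⬝ᵥ v q) p w = u p ⬝ᵥ v w + u w ⬝ᵥ v p := by
  have hcoord : ∀ (L : R3 × R3 →L[ℝ] R3) (i : Fin 3),
      HasFDerivAt (fun q => L q i) ((ContinuousLinearMap.proj i).comp L) p := fun L i =>
    ((ContinuousLinearMap.proj (R := ℝ) (φ := fun _ : Fin 3 => ℝ) i).comp L).hasFDerivAt
  have h : HasFDerivAt (fun q => u q ⬝ᵥ v q) _ p :=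
    HasFDerivAt.fun_sum fun i (_ : i ∈ Finset.univ) => (hcoord u i).mul (hcoord v i)
  rw [h.fderiv]
  simp [dotProduct, Fin.sum_univ_three]
  ring

lemma gradG_normSq (p : R3 × R3) : gradG (fun q => q.1 ⬝ᵥ q.1) p = (2 : ℝ) • p.1 := by
  funext i
  have h := fderiv_dotProduct (.fst ℝ R3 R3) (.fst ℝ R3 R3) p (Pi.single i 1, 0)
  simp only [ContinuousLinearMap.coe_fst'] at h
  simp [gradG, h, two_mul]

lemma gradK_normSq (p : R3 × R3) : gradK (fun q => q.1 ⬝ᵥ q.1) p = 0 := by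
  funext i
  have h := fderiv_dotProduct (.fst ℝ R3 R3) (.fst ℝ R3 R3) p (0, Pi.single i 1)
  simp only [ContinuousLinearMap.coe_fst'] at h
  simp [gradK, h]

lemma gradG_pairing (p : R3 × R3) : gradG (fun q => q.2 ⬝ᵥ q.1) p = p.2 := by
  funext i
  have h := fderiv_dotProduct (.snd ℝ R3 R3) (.fst ℝ R3 R3) p (Pi.single i 1, 0)
  simp only [ContinuousLinearMap.coe_fst', ContinuousLinearMap.coe_snd'] at h
  simp [gradG, h]

lemma gradK_pairing (p : R3 × R3) : gradK (fun q => q.2 ⬝ᵥ q.1) p = p.1 := by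
  funext i
  have h := fderiv_dotProduct (.snd ℝ R3 R3) (.fst ℝ R3 R3) p (0, Pi.single i 1)
  simp only [ContinuousLinearMap.coe_fst', ContinuousLinearMap.coe_snd'] at h
  simp [gradK, h]

/-- `C₂` is a Casimir of `{·,·}_a` for every coefficient `a`, and `C₁ = K·γ` is a
Casimir for every bracket with coefficient of the form `a = K + λ·γ` (covering the
Lie–Poisson bracket of 𝔰𝔢(3)* and the brackets `{·,·}_Rank1` and `{·,·}'_Rank2`);
in particular these brackets restrict to the level set `‖γ‖ = 1`. -/
theorem stmt14 :
    (∀ a : R3 × R3 → R3, ContDiff ℝ (⊤ : ℕ∞) a →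
      ∀ f : R3 × R3 → ℝ, ContDiff ℝ (⊤ : ℕ∞) f → ∀ p : R3 × R3,
        nhBracket a f (fun q => q.1 ⬝ᵥ q.1) p = 0) ∧
    (∀ lam : R3 × R3 → ℝ, ContDiff ℝ (⊤ : ℕ∞) lam →
      ∀ f : R3 × R3 → ℝ, ContDiff ℝ (⊤ : ℕ∞) f → ∀ p : R3 × R3,
        nhBracket (fun q => q.2 + lam q • q.1) f (fun q => q.2 ⬝ᵥ q.1) p = 0) := by
  refine ⟨fun a _ f _ p => ?_, fun lam _ f _ p => ?_⟩
  · rw [nhBracket, gradG_normSq, gradK_normSq]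
    simp
  · rw [nhBracket, gradG_pairing, gradK_pairing]
    simp [cross_apply, dotProduct, Fin.sum_univ_three]
    ring

end
end

section
/- Let γ, Ω ∈ ℝ³ with ‖γ‖ = 1 and set K := J·Ω − m·r²·(Ω·γ)·γ (the rank-2 kinetic momentum, as for the Chaplygin sphere). Then 1 − m·r²·(γ·J⁻¹γ) > 0, and the angular velocity is recovered from (γ,K) by Ω = J⁻¹K + m·r²·((K·J⁻¹γ)/(1 − m·r²·(γ·J⁻¹γ)))·J⁻¹γ. -/
/-!
Write `c = m r²`, `u = J⁻¹γ` and `s = γ·u`. Since `‖γ‖ = 1`, one has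
`1 - c s = ∑ᵢ γᵢ² Iᵢ / (Iᵢ + c)`, which is positive because some `γᵢ` is nonzero.
Applying `J⁻¹` to `K = J Ω - c (Ω·γ) γ` gives `J⁻¹K = Ω - c (Ω·γ) u`, and pairing `K` with
`u` gives `K·u = (Ω·γ) (1 - c s)` by symmetry of `J`. Hence the quotient in the formula is
`Ω·γ`, and the correction term restores exactly what is missing from `J⁻¹K`.
-/

open Matrix

noncomputable section

/-- `J = 𝕀 + m r² E`. -/
def Jmat (m r I1 I2 I3 : ℝ) : Matrix (Fin 3) (Fin 3) ℝ :=
  Matrix.diagonal ![I1 + m*r^2, I2 + m*r^2, I3 + m*r^2]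

theorem Jinv_mulVec_Jmat_mulVec {m r I1 I2 I3 : ℝ} (hm : 0 < m)
    (h1 : 0 < I1) (h2 : 0 < I2) (h3 : 0 < I3) (v : R3) :
    Jinv m r I1 I2 I3 *ᵥ (Jmat m r I1 I2 I3 *ᵥ v) = v := by
  have k1 : I1 + m*r^2 ≠ 0 := by positivity
  have k2 : I2 + m*r^2 ≠ 0 := by positivity
  have k3 : I3 + m*r^2 ≠ 0 := by positivity
  ext i
  fin_cases i <;> simp [Jinv, Jmat, Matrix.mulVec_diagonal, k1, k2, k3]

/-- `J⁻¹` is symmetric for the dot product, being diagonal. -/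
theorem dotProduct_Jinv_mulVec (m r I1 I2 I3 : ℝ) (v w : R3) :
    v ⬝ᵥ (Jinv m r I1 I2 I3 *ᵥ w) = (Jinv m r I1 I2 I3 *ᵥ v) ⬝ᵥ w := by
  simp only [Jinv, dotProduct, Matrix.mulVec_diagonal]
  exact Finset.sum_congr rfl fun i _ => by ring

theorem one_sub_pos_of_unit {m r I1 I2 I3 : ℝ} (hm : 0 < m)
    (h1 : 0 < I1) (h2 : 0 < I2) (h3 : 0 < I3) (γ : R3) (hγ : γ ⬝ᵥ γ = 1) :
    0 < 1 - m*r^2*(γ ⬝ᵥ (Jinv m r I1 I2 I3 *ᵥ γ)) := by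
  have k1 : 0 < I1 + m*r^2 := by positivity
  have k2 : 0 < I2 + m*r^2 := by positivity
  have k3 : 0 < I3 + m*r^2 := by positivity
  have hsum : 1 - m*r^2*(γ ⬝ᵥ (Jinv m r I1 I2 I3 *ᵥ γ)) =
      γ 0 ^ 2 * (I1 / (I1 + m*r^2)) + γ 1 ^ 2 * (I2 / (I2 + m*r^2))
        + γ 2 ^ 2 * (I3 / (I3 + m*r^2)) := by
    rw [← hγ]
    simp only [Jinv, dotProduct, Matrix.mulVec_diagonal, Fin.sum_univ_three,
      Matrix.cons_val_zero, Matrix.cons_val_one, Matrix.cons_val]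
    field_simp
    ring
  have hn : γ 0 ^ 2 + γ 1 ^ 2 + γ 2 ^ 2 = 1 := by
    simpa [dotProduct, Fin.sum_univ_three, sq] using hγ
  rw [hsum]
  by_cases g0 : γ 0 = 0
  · by_cases g1 : γ 1 = 0
    · have g2 : γ 2 ≠ 0 := by
        intro g2
        simp [g0, g1, g2] at hn
      positivity
    · positivity
  · positivity

/-- For the rank-2 kinetic momentum `K = J Ω − m r² (Ω·γ) γ` (Chaplygin sphere) with
`‖γ‖ = 1`, one has `1 − m r² (γ·J⁻¹γ) > 0` and the angular velocity is recovered by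
`Ω = J⁻¹K + m r² ((K·J⁻¹γ)/(1 − m r² (γ·J⁻¹γ))) J⁻¹γ`. -/
theorem stmt18 (m r I1 I2 I3 : ℝ) (hm : 0 < m) (hr : 0 < r)
    (h1 : 0 < I1) (h2 : 0 < I2) (h3 : 0 < I3)
    (γ Ω K : R3) (hγ : γ ⬝ᵥ γ = 1)
    (hK : K = Jmat m r I1 I2 I3 *ᵥ Ω - (m*r^2*(Ω ⬝ᵥ γ)) • γ) :
    0 < 1 - m*r^2*(γ ⬝ᵥ (Jinv m r I1 I2 I3 *ᵥ γ)) ∧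
    Ω = Jinv m r I1 I2 I3 *ᵥ K +
      (m*r^2*((K ⬝ᵥ (Jinv m r I1 I2 I3 *ᵥ γ)) /
        (1 - m*r^2*(γ ⬝ᵥ (Jinv m r I1 I2 I3 *ᵥ γ))))) • (Jinv m r I1 I2 I3 *ᵥ γ) := by
  have hpos := one_sub_pos_of_unit (r := r) hm h1 h2 h3 γ hγ
  refine ⟨hpos, ?_⟩
  have hJK : Jinv m r I1 I2 I3 *ᵥ K =
      Ω - (m*r^2*(Ω ⬝ᵥ γ)) • (Jinv m r I1 I2 I3 *ᵥ γ) := by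
    rw [hK, Matrix.mulVec_sub, Matrix.mulVec_smul, Jinv_mulVec_Jmat_mulVec hm h1 h2 h3]
  have hKu : K ⬝ᵥ (Jinv m r I1 I2 I3 *ᵥ γ) =
      (Ω ⬝ᵥ γ) * (1 - m*r^2*(γ ⬝ᵥ (Jinv m r I1 I2 I3 *ᵥ γ))) := by
    rw [dotProduct_Jinv_mulVec, hJK, sub_dotProduct, smul_dotProduct, smul_eq_mul,
      dotProduct_comm (Jinv m r I1 I2 I3 *ᵥ γ) γ]
    ring
  rw [hKu, mul_div_cancel_right₀ _ hpos.ne', hJK, sub_add_cancel]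

end
end
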